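/- Let T₁ and T₂ be sets of propositional formulas and let P, Q ⊆ L(T₁) ∪ L(T₂) be sets of variables with P ⊆ L(T₁) and P ∪ Q ⊇ L(T₂). Let γ be a set of formulas logically equivalent to Cn^{L(T₁) ∩ L(T₂)}(T₂). Then for every formula φ ∈ 𝓛(T₁), if Circ[T₁ ∪ γ;P;Q] ⊨ φ, then Circ[T₁ ∪ T₂;P;Q] ⊨ φ. -/

import Mathlib

namespace NMR

/-- Propositional formulas over a variable type `V`. -/
inductive PropForm (V : Type*) : Type _ where
  | var : V → PropForm V
  | tru : PropForm V
  | fls : PropForm V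
  | neg : PropForm V → PropForm V
  | conj : PropForm V → PropForm V → PropForm V
  | disj : PropForm V → PropForm V → PropForm V
  | impl : PropForm V → PropForm V → PropForm V

variable {V : Type*}

/-- Truth value of a formula under a valuation. -/
def PropForm.eval (ν : V → Bool) : PropForm V → Bool
  | .var v => ν v
  | .tru => true
  | .fls => false
  | .neg φ => !(φ.eval ν)
  | .conj φ ψ => φ.eval ν && ψ.eval ν
  | .disj φ ψ => φ.eval ν || ψ.eval ν
  | .impl φ ψ => !(φ.eval ν) || ψ.eval ν

/-- The set of variables occurring in a formula. -/
def PropForm.vars : PropForm V → Set V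
  | .var v => {v}
  | .tru => ∅
  | .fls => ∅
  | .neg φ => φ.vars
  | .conj φ ψ => φ.vars ∪ ψ.vars
  | .disj φ ψ => φ.vars ∪ ψ.vars
  | .impl φ ψ => φ.vars ∪ ψ.vars

/-- `ν ⊨ φ`. -/
def Sat (ν : V → Bool) (φ : PropForm V) : Prop := φ.eval ν = true

/-- `ν ⊨ T` for a set of formulas. -/
def SatSet (ν : V → Bool) (T : Set (PropForm V)) : Prop := ∀ φ ∈ T, Sat ν φ

/-- `T ⊨ φ`. -/
def Entails (T : Set (PropForm V)) (φ : PropForm V) : Prop :=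
  ∀ ν : V → Bool, SatSet ν T → Sat ν φ

/-- `T ⊨ Γ` for a set `Γ`. -/
def EntailsSet (T Γ : Set (PropForm V)) : Prop := ∀ φ ∈ Γ, Entails T φ

/-- A tautology is satisfied by every valuation. -/
def Tautology (φ : PropForm V) : Prop := ∀ ν : V → Bool, Sat ν φ

/-- `L(T)`: the set of variables occurring in a set of formulas. -/
def varsOf (T : Set (PropForm V)) : Set V := ⋃ φ ∈ T, φ.vars

/-- `𝓛(S)`: the set of formulas all of whose variables lie in `S`. -/
def FormsOver (S : Set V) : Set (PropForm V) := {φ | φ.vars ⊆ S}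

/-- `Cn^S(T)`: the formulas in `𝓛(S)` entailed by `T`. -/
def Cn (S : Set V) (T : Set (PropForm V)) : Set (PropForm V) :=
  {φ | φ.vars ⊆ S ∧ Entails T φ}

/-- Two sets of formulas are logically equivalent iff they have the same models. -/
def EquivTheories (T T' : Set (PropForm V)) : Prop :=
  ∀ ν : V → Bool, SatSet ν T ↔ SatSet ν T'

/-- `ν ≤_{P,Q} ν'`. -/
def circLe (P Q : Set V) (ν ν' : V → Bool) : Prop :=
  (∀ x, x ∉ P ∪ Q → ν x = ν' x) ∧
    {x | x ∈ P ∧ ν x = true} ⊆ {x | x ∈ P ∧ ν' x = true}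

/-- `ν <_{P,Q} ν'`. -/
def circLt (P Q : Set V) (ν ν' : V → Bool) : Prop :=
  circLe P Q ν ν' ∧ {x | x ∈ P ∧ ν x = true} ⊂ {x | x ∈ P ∧ ν' x = true}

/-- `ν` is a model of `Circ[T;P;Q]`. -/
def CircModel (T : Set (PropForm V)) (P Q : Set V) (ν : V → Bool) : Prop :=
  SatSet ν T ∧ ¬ ∃ ν' : V → Bool, SatSet ν' T ∧ circLt P Q ν' ν

/-- `Circ[T;P;Q] ⊨ φ`. -/
def CircEntails (T : Set (PropForm V)) (P Q : Set V) (φ : PropForm V) : Prop :=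
  ∀ ν : V → Bool, CircModel T P Q ν → Sat ν φ

/-!
A valuation that satisfies `Cn^S(T)` agrees on `S` with some model of `T`: by compactness only
finite parts of `S` matter, and a valuation of a finite part is described by a single formula.
Hence a model of `T₁ ∪ γ` becomes a model of `T₁ ∪ T₂` after changing it on `L(T₂) \ L(T₁)` alone.
These variables lie in `Q` and not in `P`, so the order `<_{P,Q}` does not see the change, and a
counterexample to minimality among the models of `T₁ ∪ γ` yields one among those of `T₁ ∪ T₂`.
-/

variable {S P Q : Set V} {T T₁ T₂ Γ γ : Set (PropForm V)} {μ ν κ : V → Bool}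

theorem eval_eq_of_eqOn {φ : PropForm V} (h : Set.EqOn μ ν φ.vars) : φ.eval μ = φ.eval ν := by
  induction φ with
  | var v => exact h rfl
  | tru => rfl
  | fls => rfl
  | neg φ ih => simp only [PropForm.eval, ih h]
  | conj φ ψ ihφ ihψ | disj φ ψ ihφ ihψ | impl φ ψ ihφ ihψ =>
    obtain ⟨hφ, hψ⟩ := Set.eqOn_union.1 h
    simp only [PropForm.eval, ihφ hφ, ihψ hψ]

theorem sat_congr {φ : PropForm V} (h : Set.EqOn μ ν φ.vars) : Sat μ φ ↔ Sat ν φ := by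
  rw [Sat, Sat, eval_eq_of_eqOn h]

theorem satSet_congr (h : Set.EqOn μ ν (varsOf T)) : SatSet μ T ↔ SatSet ν T :=
  forall₂_congr fun _ hφ => sat_congr (h.mono (Set.subset_biUnion_of_mem hφ))

theorem satSet_union : SatSet ν (T₁ ∪ T₂) ↔ SatSet ν T₁ ∧ SatSet ν T₂ :=
  forall₂_or_left

theorem entailsSet_iff : EntailsSet T Γ ↔ ∀ ν, SatSet ν T → SatSet ν Γ :=
  ⟨fun h ν hν φ hφ => h φ hφ ν hν, fun h φ hφ ν hν => h ν hν φ hφ⟩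

theorem entailsSet_cn : EntailsSet T (Cn S T) :=
  fun _ hφ => hφ.2

theorem sat_neg {φ : PropForm V} : Sat ν (.neg φ) ↔ ¬ Sat ν φ := by
  simp only [Sat, PropForm.eval, Bool.not_eq_true', Bool.not_eq_true]

theorem sat_conj {φ ψ : PropForm V} : Sat ν (.conj φ ψ) ↔ Sat ν φ ∧ Sat ν ψ :=
  Bool.and_eq_true_iff

theorem exists_literal (ν : V → Bool) (x : V) :
    ∃ l : PropForm V, l.vars = {x} ∧ ∀ μ, Sat μ l ↔ μ x = ν x := by
  cases hx : ν x with
  | true => exact ⟨.var x, rfl, fun _ => Iff.rfl⟩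
  | false => exact ⟨.neg (.var x), rfl, fun _ => sat_neg.trans Bool.eq_false_iff.symm⟩

theorem exists_diagram {u : Set V} (hu : u.Finite) (ν : V → Bool) :
    ∃ δ : PropForm V, δ.vars ⊆ u ∧ ∀ μ, Sat μ δ ↔ Set.EqOn μ ν u := by
  induction u, hu using Set.Finite.induction_on with
  | empty => exact ⟨.tru, subset_rfl, fun μ => iff_of_true rfl (Set.eqOn_empty μ ν)⟩
  | @insert x u _ _ ih =>
    obtain ⟨δ, hδ_vars, hδ⟩ := ih
    obtain ⟨l, hl_vars, hl⟩ := exists_literal ν x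
    refine ⟨.conj l δ, Set.union_subset_union hl_vars.subset hδ_vars, fun μ => ?_⟩
    rw [sat_conj, hl, hδ, ← Set.singleton_union, Set.eqOn_union, Set.eqOn_singleton]

theorem continuous_eval (φ : PropForm V) : Continuous fun ν : V → Bool => φ.eval ν := by
  induction φ with
  | var v => exact continuous_apply v
  | tru | fls => exact continuous_const
  | neg φ ih => exact (continuous_of_discreteTopology (f := not)).comp ih
  | conj φ ψ ihφ ihψ =>
    exact (continuous_of_discreteTopology (f := fun b : Bool × Bool => b.1 && b.2)).comp
      (ihφ.prodMk ihψ)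
  | disj φ ψ ihφ ihψ =>
    exact (continuous_of_discreteTopology (f := fun b : Bool × Bool => b.1 || b.2)).comp
      (ihφ.prodMk ihψ)
  | impl φ ψ ihφ ihψ =>
    exact (continuous_of_discreteTopology (f := fun b : Bool × Bool => !b.1 || b.2)).comp
      (ihφ.prodMk ihψ)

theorem isClosed_setOfPred_satSet (T : Set (PropForm V)) :
    IsClosed {ν : V → Bool | SatSet ν T} := by
  simp only [SatSet, Set.ofPred_forall]
  exact isClosed_biInter fun φ _ => isClosed_eq (continuous_eval φ) continuous_const

theorem exists_satSet_eqOn_of_finite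
    (h : ∀ u ⊆ S, u.Finite → ∃ μ, SatSet μ T ∧ Set.EqOn μ ν u) :
    ∃ μ, SatSet μ T ∧ Set.EqOn μ ν S := by
  obtain ⟨μ, hμT, hμν⟩ := (isClosed_setOfPred_satSet T).isCompact.inter_iInter_nonempty
    (fun x : S => {μ | μ x = ν x})
    (fun x => isClosed_eq (continuous_apply x.1) continuous_const) fun u => by
      obtain ⟨μ, hμT, hμν⟩ := h (Subtype.val '' (u : Set S)) (Subtype.coe_image_subset S u)
        (u.finite_toSet.image _)
      exact ⟨μ, hμT, Set.mem_iInter₂.2 fun x hx => hμν (Set.mem_image_of_mem _ hx)⟩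
  exact ⟨μ, hμT, fun x hx => Set.mem_iInter.1 hμν ⟨x, hx⟩⟩

theorem exists_satSet_eqOn_of_satSet_cn (h : SatSet ν (Cn S T)) :
    ∃ μ, SatSet μ T ∧ Set.EqOn μ ν S := by
  refine exists_satSet_eqOn_of_finite fun u huS hu => ?_
  obtain ⟨δ, hδ_vars, hδ⟩ := exists_diagram hu ν
  by_contra! hT
  have hneg : Entails T (.neg δ) := fun μ hμ => sat_neg.2 fun hμδ => hT μ hμ ((hδ μ).1 hμδ)
  exact sat_neg.1 (h _ ⟨hδ_vars.trans huS, hneg⟩) ((hδ ν).2 (Set.eqOn_refl ν u))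

theorem exists_satSet_union_eqOn (h₁ : SatSet ν T₁)
    (h₂ : SatSet ν (Cn (varsOf T₁ ∩ varsOf T₂) T₂)) :
    ∃ μ, SatSet μ (T₁ ∪ T₂) ∧ Set.EqOn μ ν (varsOf T₂ \ varsOf T₁)ᶜ := by
  classical
  obtain ⟨κ, hκT₂, hκν⟩ := exists_satSet_eqOn_of_satSet_cn h₂
  let μ := (varsOf T₂ \ varsOf T₁).piecewise κ ν
  have hμν : Set.EqOn μ ν (varsOf T₂ \ varsOf T₁)ᶜ := Set.piecewise_eqOn_compl _ κ ν
  have hμν₁ : Set.EqOn μ ν (varsOf T₁) := hμν.mono disjoint_sdiff_self_right.subset_compl_right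
  have hμκ : Set.EqOn μ κ (varsOf T₂) := by
    intro x hx₂
    by_cases hx₁ : x ∈ varsOf T₁
    · exact (hμν₁ hx₁).trans (hκν ⟨hx₁, hx₂⟩).symm
    · exact Set.piecewise_eqOn _ κ ν ⟨hx₂, hx₁⟩
  exact ⟨μ, satSet_union.2 ⟨(satSet_congr hμν₁).2 h₁, (satSet_congr hμκ).2 hκT₂⟩, hμν⟩

theorem circLt_congr_left (h : Set.EqOn μ ν (Q \ P)ᶜ) : circLt P Q μ κ ↔ circLt P Q ν κ := by
  have hP : {x | x ∈ P ∧ μ x = true} = {x | x ∈ P ∧ ν x = true} :=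
    Set.ext fun x => and_congr_right fun hxP => by rw [h fun hx => hx.2 hxP]
  have hfixed : ∀ x, x ∉ P ∪ Q → μ x = ν x := fun x hx => h fun hxQ => hx (.inr hxQ.1)
  have hagree : (∀ x, x ∉ P ∪ Q → μ x = κ x) ↔ ∀ x, x ∉ P ∪ Q → ν x = κ x :=
    forall₂_congr fun x hx => by rw [hfixed x hx]
  rw [circLt, circLt, circLe, circLe, hP, hagree]

theorem circ_gamma_T_general (hQ : varsOf T₂ \ varsOf T₁ ⊆ Q \ P) (hT₂γ : EntailsSet T₂ γ)
    (hγ : EntailsSet γ (Cn (varsOf T₁ ∩ varsOf T₂) T₂)) (hν : CircModel (T₁ ∪ T₂) P Q ν) :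
    CircModel (T₁ ∪ γ) P Q ν := by
  obtain ⟨hνT, hmin⟩ := hν
  obtain ⟨hνT₁, hνT₂⟩ := satSet_union.1 hνT
  refine ⟨satSet_union.2 ⟨hνT₁, entailsSet_iff.1 hT₂γ ν hνT₂⟩, ?_⟩
  rintro ⟨κ, hκ, hκν⟩
  obtain ⟨hκT₁, hκγ⟩ := satSet_union.1 hκ
  obtain ⟨μ, hμ, hμκ⟩ := exists_satSet_union_eqOn hκT₁ (entailsSet_iff.1 hγ κ hκγ)
  have hμκQ : Set.EqOn μ κ (Q \ P)ᶜ := hμκ.mono (Set.compl_subset_compl.2 hQ)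
  exact hmin ⟨μ, hμ, (circLt_congr_left hμκQ).2 hκν⟩

/-- with `P ∪ Q ⊇ L(T₂)`, circumscriptive consequences of `T₁ ∪ γ`
in `𝓛(T₁)` are circumscriptive consequences of `T₁ ∪ T₂`. -/
theorem circ_gamma_T {V : Type*} (T₁ T₂ γ : Set (PropForm V)) (P Q : Set V)
    (hPQ : P ∪ Q ⊆ varsOf T₁ ∪ varsOf T₂) (hP : P ⊆ varsOf T₁)
    (hT₂ : varsOf T₂ ⊆ P ∪ Q)
    (hγ : EquivTheories γ (Cn (varsOf T₁ ∩ varsOf T₂) T₂)) :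
    ∀ φ ∈ FormsOver (varsOf T₁),
      CircEntails (T₁ ∪ γ) P Q φ → CircEntails (T₁ ∪ T₂) P Q φ := by
  intro φ _ hφ ν hν
  have hQ : varsOf T₂ \ varsOf T₁ ⊆ Q \ P := fun x hx =>
    have hxP : x ∉ P := fun hxP => hx.2 (hP hxP)
    ⟨(hT₂ hx.1).resolve_left hxP, hxP⟩
  have hT₂γ : EntailsSet T₂ γ :=
    entailsSet_iff.2 fun μ hμ => (hγ μ).2 (entailsSet_iff.1 entailsSet_cn μ hμ)
  exact hφ ν (circ_gamma_T_general hQ hT₂γ (entailsSet_iff.2 fun μ => (hγ μ).1) hν)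

end NMR
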